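/- Let M be a finite nonempty set of alternatives partitioned into nests, with B(m) denoting the nest containing alternative m. Let θ > 0, let each nest N have a dissimilarity factor τ_N with 0 < τ_N ≤ 1, and let (V_m)_{m∈M} be real deterministic utilities. Define the inclusive value IV_N = τ_N · ln( Σ_{m∈N} exp(θ V_m / τ_N) ). Then the probability vector p* given by the nested logit formula p*_m = ( exp(IV_{B(m)}) / Σ_N exp(IV_N) ) · ( exp(θ V_m / τ_{B(m)}) / Σ_{m'∈B(m)} exp(θ V_{m'} / τ_{B(m)}) ) is an optimal solution of the problem of maximizing Σ_{m∈M} V_m p_m − (1/θ) Σ_{m∈M} [ τ_{B(m)} p_m ln p_m + (1 − τ_{B(m)}) p_m ln( Σ_{m'∈B(m)} p_{m'} ) ] over all strictly positive probability vectors p on M with Σ_{m∈M} p_m = 1. -/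

import Mathlib

open Real Finset

/-!
With `H_s(q) = ∑ i ∈ s, q i * log ((∑ j ∈ s, q j) / q i)`, the chain rule for entropy writes `θ`
times the objective as

`∑ N, (∑ m ∈ N, p m * (θ * V m) + τ N * H_N(p)) + H(P)`, where `P N = ∑ m ∈ N, p m`.

The Gibbs variational principle `∑ q i * x i + H_s(q) ≤ (∑ q i) * log (∑ exp (x i))`, with equality
when `q` is proportional to `exp x`, bounds the summand of each nest by `P N * IV N`, and then
`∑ N, P N * IV N + H(P)` by `log (∑ N, exp (IV N))`. The nested logit vector is the one for which
equality holds at both levels.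
-/

section Gibbs

variable {ι : Type*} {s : Finset ι} {q x : ι → ℝ}

/-- The multinomial logit (Gibbs) weights on `s` with utilities `x`. -/
noncomputable def softmax (s : Finset ι) (x : ι → ℝ) (i : ι) : ℝ :=
  exp (x i) / ∑ j ∈ s, exp (x j)

/-- The log-partition function of the utilities `x` on `s`, with junk value `0` for empty `s`. -/
noncomputable def logSumExp (s : Finset ι) (x : ι → ℝ) : ℝ :=
  log (∑ i ∈ s, exp (x i))

/-- The Shannon entropy of a finite mass distribution, extended to arbitrary total mass so as to be
homogeneous of degree one; `log 0 = 0` implements the convention `0 log 0 = 0`. -/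
noncomputable def massEntropy (s : Finset ι) (q : ι → ℝ) : ℝ :=
  ∑ i ∈ s, q i * (log (∑ j ∈ s, q j) - log (q i))

theorem sum_exp_pos (hs : s.Nonempty) : 0 < ∑ i ∈ s, exp (x i) :=
  sum_pos (fun _ _ => exp_pos _) hs

theorem softmax_pos (hs : s.Nonempty) (i : ι) : 0 < softmax s x i :=
  div_pos (exp_pos _) (sum_exp_pos hs)

theorem sum_softmax (hs : s.Nonempty) : ∑ i ∈ s, softmax s x i = 1 := by
  simp only [softmax]
  rw [← sum_div, div_self (sum_exp_pos hs).ne']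

theorem log_softmax (hs : s.Nonempty) (i : ι) : log (softmax s x i) = x i - logSumExp s x := by
  rw [softmax, log_div (exp_ne_zero _) (sum_exp_pos hs).ne', log_exp, logSumExp]

theorem log_mul_softmax (hs : s.Nonempty) {c : ℝ} (hc : c ≠ 0) (i : ι) :
    log (c * softmax s x i) = log c + x i - logSumExp s x := by
  rw [log_mul hc (softmax_pos hs i).ne', log_softmax hs, add_sub_assoc]

theorem mul_log_sub_log_le_sub {a b : ℝ} (ha : 0 < a) (hb : 0 ≤ b) :
    b * (log a - log b) ≤ a - b := by
  rcases hb.eq_or_lt with rfl | hb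
  · simpa using ha.le
  calc b * (log a - log b) = b * log (a / b) := by rw [log_div ha.ne' hb.ne']
    _ ≤ b * (a / b - 1) := by gcongr; exact log_le_sub_one_of_pos (div_pos ha hb)
    _ = a - b := by field_simp

theorem sum_mul_add_massEntropy_le (hq : ∀ i ∈ s, 0 ≤ q i) :
    ∑ i ∈ s, q i * x i + massEntropy s q ≤ (∑ i ∈ s, q i) * logSumExp s x := by
  set Q := ∑ i ∈ s, q i with hQ
  have hQ_nonneg : 0 ≤ Q := sum_nonneg hq
  rcases hQ_nonneg.eq_or_lt with hQ_zero | hQ_pos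
  · have hq_zero : ∀ i ∈ s, q i = 0 := (sum_eq_zero_iff_of_nonneg hq).1 hQ_zero.symm
    rw [massEntropy, ← sum_add_distrib, ← hQ_zero, zero_mul]
    exact (sum_eq_zero fun i hi => by simp [hq_zero i hi]).le
  have hs : s.Nonempty := nonempty_of_sum_ne_zero hQ_pos.ne'
  rw [← sub_nonpos]
  calc ∑ i ∈ s, q i * x i + massEntropy s q - Q * logSumExp s x
      = ∑ i ∈ s, q i * (log (Q * softmax s x i) - log (q i)) := by
        simp only [log_mul_softmax hs hQ_pos.ne']
        rw [massEntropy, hQ, sum_mul, ← sum_add_distrib, ← sum_sub_distrib]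
        exact sum_congr rfl fun i _ => by ring
    _ ≤ ∑ i ∈ s, (Q * softmax s x i - q i) := sum_le_sum fun i hi =>
        mul_log_sub_log_le_sub (mul_pos hQ_pos (softmax_pos hs i)) (hq i hi)
    _ = 0 := by rw [sum_sub_distrib, ← mul_sum, sum_softmax hs, mul_one, sub_self]

theorem sum_eq_of_eq_mul_softmax (hs : s.Nonempty) {c : ℝ}
    (hq : ∀ i ∈ s, q i = c * softmax s x i) : ∑ i ∈ s, q i = c := by
  rw [sum_congr rfl hq, ← mul_sum, sum_softmax hs, mul_one]

theorem sum_mul_add_massEntropy_eq_of_eq_mul_softmax (hs : s.Nonempty) {c : ℝ}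
    (hq : ∀ i ∈ s, q i = c * softmax s x i) :
    ∑ i ∈ s, q i * x i + massEntropy s q = (∑ i ∈ s, q i) * logSumExp s x := by
  rw [massEntropy, sum_mul, ← sum_add_distrib, sum_eq_of_eq_mul_softmax hs hq]
  refine sum_congr rfl fun i hi => ?_
  rcases eq_or_ne c 0 with rfl | hc
  · simp [hq i hi]
  rw [hq i hi, log_mul_softmax hs hc]
  ring

theorem sum_mul_add_mul_massEntropy {t : ℝ} (ht : t ≠ 0) :
    ∑ i ∈ s, q i * x i + t * massEntropy s q =
      t * (∑ i ∈ s, q i * (x i / t) + massEntropy s q) := by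
  rw [mul_add, mul_sum]
  congr 1
  exact sum_congr rfl fun i _ => by field_simp

end Gibbs

section NestedLogit

variable {M 𝒩 : Type*} [Fintype M] [DecidableEq 𝒩] {B : M → 𝒩} {θ : ℝ} {τ : 𝒩 → ℝ} {V p : M → ℝ}

/-- The nest `N` of the partition of the alternatives into the fibers of `B`. -/
def nest (B : M → 𝒩) (N : 𝒩) : Finset M :=
  univ.filter (fun m => B m = N)

/-- The probability `p_N` that the chosen alternative lies in the nest `N`. -/
def nestMass (B : M → 𝒩) (p : M → ℝ) (N : 𝒩) : ℝ :=
  ∑ m ∈ nest B N, p m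

/-- The inclusive value `IV_N` of the nest `N`. -/
noncomputable def inclusiveValue (B : M → 𝒩) (θ : ℝ) (τ : 𝒩 → ℝ) (V : M → ℝ) (N : 𝒩) : ℝ :=
  τ N * logSumExp (nest B N) (fun m => θ * V m / τ N)

/-- The nested logit probability `p_{B(m)} * p_{m/B(m)}` of the alternative `m`. -/
noncomputable def nestedLogit [Fintype 𝒩] (B : M → 𝒩) (θ : ℝ) (τ : 𝒩 → ℝ) (V : M → ℝ) (m : M) :
    ℝ :=
  softmax univ (inclusiveValue B θ τ V) (B m) *
    softmax (nest B (B m)) (fun m' => θ * V m' / τ (B m)) m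

/-- The objective of the maximization problem: expected utility plus `1 / θ` times the nested
entropy. -/
noncomputable def satisfaction (B : M → 𝒩) (θ : ℝ) (τ : 𝒩 → ℝ) (V p : M → ℝ) : ℝ :=
  ∑ m, V m * p m - (1 / θ) * ∑ m, (τ (B m) * p m * log (p m) +
    (1 - τ (B m)) * p m * log (nestMass B p (B m)))

theorem mem_nest {m : M} {N : 𝒩} : m ∈ nest B N ↔ B m = N := by
  simp [nest]

theorem nest_apply_nonempty (B : M → 𝒩) (m : M) : (nest B (B m)).Nonempty :=
  ⟨m, mem_nest.2 rfl⟩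

theorem nest_nonempty (hB : Function.Surjective B) (N : 𝒩) : (nest B N).Nonempty := by
  obtain ⟨m, rfl⟩ := hB N
  exact nest_apply_nonempty B m

theorem sum_mul_add_mul_massEntropy_nest_le {N : 𝒩} (hτ : 0 < τ N) (hp : ∀ m, 0 ≤ p m) :
    ∑ m ∈ nest B N, p m * (θ * V m) + τ N * massEntropy (nest B N) p ≤
      nestMass B p N * inclusiveValue B θ τ V N := by
  rw [sum_mul_add_mul_massEntropy hτ.ne', inclusiveValue, mul_left_comm]
  exact mul_le_mul_of_nonneg_left (sum_mul_add_massEntropy_le fun m _ => hp m) hτ.le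

variable [Fintype 𝒩]

theorem sum_sum_nest (B : M → 𝒩) (f : M → ℝ) : ∑ N, ∑ m ∈ nest B N, f m = ∑ m, f m :=
  sum_fiberwise univ B f

theorem sum_nestMass (B : M → 𝒩) (p : M → ℝ) : ∑ N, nestMass B p N = ∑ m, p m :=
  sum_sum_nest B p

theorem massEntropy_nestMass (hp_sum : ∑ m, p m = 1) :
    massEntropy univ (nestMass B p) = ∑ N, ∑ m ∈ nest B N, -(p m * log (nestMass B p N)) := by
  rw [massEntropy, sum_nestMass, hp_sum, log_one]
  refine sum_congr rfl fun N _ => ?_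
  rw [sum_neg_distrib, ← sum_mul, ← nestMass, zero_sub, mul_neg]

theorem mul_satisfaction_eq (hθ : θ ≠ 0) (hp_sum : ∑ m, p m = 1) :
    θ * satisfaction B θ τ V p =
      ∑ N, (∑ m ∈ nest B N, p m * (θ * V m) + τ N * massEntropy (nest B N) p) +
        massEntropy univ (nestMass B p) := by
  rw [massEntropy_nestMass hp_sum, ← sum_add_distrib, satisfaction, mul_sub, ← mul_assoc,
    mul_one_div_cancel hθ, one_mul, mul_sum, ← sum_sub_distrib, ← sum_sum_nest B]
  refine sum_congr rfl fun N _ => ?_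
  rw [massEntropy, mul_sum, ← sum_add_distrib, ← sum_add_distrib]
  refine sum_congr rfl fun m hm => ?_
  rw [mem_nest.1 hm, ← nestMass]
  ring

theorem satisfaction_le (hθ : 0 < θ) (hτ : ∀ N, 0 < τ N) (hp : p ∈ stdSimplex ℝ M) :
    satisfaction B θ τ V p ≤ logSumExp univ (inclusiveValue B θ τ V) / θ := by
  obtain ⟨hp_nonneg, hp_sum⟩ := hp
  rw [le_div_iff₀' hθ, mul_satisfaction_eq hθ.ne' hp_sum]
  calc _ ≤ ∑ N, nestMass B p N * inclusiveValue B θ τ V N + massEntropy univ (nestMass B p) := by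
        gcongr with N
        exact sum_mul_add_mul_massEntropy_nest_le (hτ N) hp_nonneg
    _ ≤ (∑ N, nestMass B p N) * logSumExp univ (inclusiveValue B θ τ V) :=
        sum_mul_add_massEntropy_le fun N _ => sum_nonneg fun m _ => hp_nonneg m
    _ = logSumExp univ (inclusiveValue B θ τ V) := by rw [sum_nestMass, hp_sum, one_mul]

theorem nestedLogit_eq_of_mem_nest {m : M} {N : 𝒩} (hm : m ∈ nest B N) :
    nestedLogit B θ τ V m = softmax univ (inclusiveValue B θ τ V) N *
      softmax (nest B N) (fun m' => θ * V m' / τ N) m := by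
  rw [nestedLogit, mem_nest.1 hm]

theorem nestedLogit_pos (m : M) : 0 < nestedLogit B θ τ V m :=
  mul_pos (softmax_pos ⟨B m, mem_univ _⟩ _) (softmax_pos (nest_apply_nonempty B m) _)

theorem nestMass_nestedLogit (hB : Function.Surjective B) (N : 𝒩) :
    nestMass B (nestedLogit B θ τ V) N = softmax univ (inclusiveValue B θ τ V) N :=
  sum_eq_of_eq_mul_softmax (nest_nonempty hB N) fun _ => nestedLogit_eq_of_mem_nest

theorem sum_nestedLogit [Nonempty 𝒩] (hB : Function.Surjective B) :
    ∑ m, nestedLogit B θ τ V m = 1 := by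
  simp only [← sum_nestMass B, nestMass_nestedLogit hB, sum_softmax univ_nonempty]

theorem sum_mul_add_mul_massEntropy_nest_nestedLogit (hB : Function.Surjective B) {N : 𝒩}
    (hτ : τ N ≠ 0) :
    ∑ m ∈ nest B N, nestedLogit B θ τ V m * (θ * V m) +
        τ N * massEntropy (nest B N) (nestedLogit B θ τ V) =
      nestMass B (nestedLogit B θ τ V) N * inclusiveValue B θ τ V N := by
  rw [sum_mul_add_mul_massEntropy hτ, inclusiveValue, mul_left_comm, nestMass,
    sum_mul_add_massEntropy_eq_of_eq_mul_softmax (nest_nonempty hB N)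
      fun _ => nestedLogit_eq_of_mem_nest]

theorem satisfaction_nestedLogit [Nonempty 𝒩] (hB : Function.Surjective B) (hθ : θ ≠ 0)
    (hτ : ∀ N, τ N ≠ 0) :
    satisfaction B θ τ V (nestedLogit B θ τ V) =
      logSumExp univ (inclusiveValue B θ τ V) / θ := by
  have nestMass_eq (N : 𝒩) (_ : N ∈ univ) : nestMass B (nestedLogit B θ τ V) N =
      1 * softmax univ (inclusiveValue B θ τ V) N := by
    rw [nestMass_nestedLogit hB, one_mul]
  rw [eq_div_iff hθ, mul_comm, mul_satisfaction_eq hθ (sum_nestedLogit hB),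
    sum_congr rfl fun N _ => sum_mul_add_mul_massEntropy_nest_nestedLogit hB (hτ N),
    sum_mul_add_massEntropy_eq_of_eq_mul_softmax univ_nonempty nestMass_eq,
    sum_nestMass, sum_nestedLogit hB, one_mul]

end NestedLogit

theorem nested_logit_maximizes_satisfaction_general
    {M 𝒩 : Type*} [Fintype M] [Nonempty M] [Fintype 𝒩] [DecidableEq 𝒩]
    {B : M → 𝒩} (hB : Function.Surjective B) {θ : ℝ} (hθ : 0 < θ)
    {τ : 𝒩 → ℝ} (hτ : ∀ N, 0 < τ N) (V : M → ℝ) :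
    (∀ m, 0 < nestedLogit B θ τ V m) ∧ ∑ m, nestedLogit B θ τ V m = 1 ∧
      ∀ p ∈ stdSimplex ℝ M,
        satisfaction B θ τ V p ≤ satisfaction B θ τ V (nestedLogit B θ τ V) := by
  have : Nonempty 𝒩 := Nonempty.map B ‹_›
  refine ⟨nestedLogit_pos, sum_nestedLogit hB, fun p hp => ?_⟩
  rw [satisfaction_nestedLogit hB hθ.ne' fun N => (hτ N).ne']
  exact satisfaction_le hθ hτ hp

/-- The nested logit probability vector is an optimal solution of the
satisfaction/entropy maximization problem `MaxSatisNL`. -/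
theorem nested_logit_maximizes_satisfaction
    {M 𝒩 : Type*} [Fintype M] [Nonempty M] [Fintype 𝒩] [DecidableEq 𝒩]
    (B : M → 𝒩) (hB : Function.Surjective B)
    (θ : ℝ) (hθ : 0 < θ)
    (τ : 𝒩 → ℝ) (hτ0 : ∀ N, 0 < τ N) (hτ1 : ∀ N, τ N ≤ 1)
    (V : M → ℝ)
    (IV : 𝒩 → ℝ)
    (hIV : ∀ N, IV N = τ N * Real.log (∑ m ∈ univ.filter (fun m => B m = N),
      Real.exp (θ * V m / τ N)))
    (pstar : M → ℝ)
    (hpstar : ∀ m, pstar m =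
      (Real.exp (IV (B m)) / ∑ N, Real.exp (IV N)) *
      (Real.exp (θ * V m / τ (B m)) /
        ∑ m' ∈ univ.filter (fun m' => B m' = B m), Real.exp (θ * V m' / τ (B m)))) :
    (∀ m, 0 < pstar m) ∧ (∑ m, pstar m = 1) ∧
    ∀ p : M → ℝ, (∀ m, 0 < p m) → (∑ m, p m = 1) →
      (∑ m, V m * p m -
        (1 / θ) * ∑ m, (τ (B m) * p m * Real.log (p m) +
          (1 - τ (B m)) * p m *
            Real.log (∑ m' ∈ univ.filter (fun m' => B m' = B m), p m'))) ≤
      (∑ m, V m * pstar m -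
        (1 / θ) * ∑ m, (τ (B m) * pstar m * Real.log (pstar m) +
          (1 - τ (B m)) * pstar m *
            Real.log (∑ m' ∈ univ.filter (fun m' => B m' = B m), pstar m'))) := by
  obtain rfl : IV = inclusiveValue B θ τ V := funext hIV
  obtain rfl : pstar = nestedLogit B θ τ V := funext hpstar
  exact (nested_logit_maximizes_satisfaction_general hB hθ hτ0 V).imp_right <|
    And.imp_right fun hmax p hp hp_sum => hmax p ⟨fun m => (hp m).le, hp_sum⟩
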